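/- Let Q be a finite quiver without loops and multiedges and let R be a lluf proper subquiver of Q. If R admits a rank function ρ ∈ ℝ^{Q_0} such that (ρ(v)−ρ(w)+1)(ρ(v')−ρ(w')+1) > 0 for any (v,w),(v',w') ∈ Q_1 ∖ R_1, then DE(R) is a face of DE(Q). -/

import Mathlib

open scoped BigOperators

/-- The vector `ε_(v,w) = e_v - e_w` in `ℝ^V`. -/
def epsVec {V : Type*} [DecidableEq V] (e : V × V) : V → ℝ :=
  fun u => (if u = e.1 then (1 : ℝ) else 0) - (if u = e.2 then (1 : ℝ) else 0)

/-- The directed edge polytope of the quiver with edge set `E`. -/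
def DE {V : Type*} [DecidableEq V] (E : Set (V × V)) : Set (V → ℝ) :=
  convexHull ℝ (epsVec '' E)

/-- The edge relation of a quiver. -/
def edgeRel {V : Type*} (E : Set (V × V)) : V → V → Prop := fun a b => (a, b) ∈ E

/-- Number of connected components (with respect to undirected walks). -/
noncomputable def numComponents {V : Type*} (E : Set (V × V)) : ℕ :=
  Nat.card (Quot (Relation.EqvGen (edgeRel E)))

/-- `E` admits a rank function. -/
def HasRankFn {V : Type*} (E : Set (V × V)) : Prop :=
  ∃ ρ : V → ℝ, ∀ e ∈ E, ρ e.1 + 1 = ρ e.2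

open Classical in
/-- Dimension of a polytope: dimension of its affine hull, `-1` for the empty set. -/
noncomputable def polyDim {V : Type*} (s : Set (V → ℝ)) : ℤ :=
  if s = ∅ then -1 else (Module.finrank ℝ (affineSpan ℝ s).direction : ℤ)

/-- `F` is a face of `P`: `F = P` or `F` is the intersection of `P`
with a supporting hyperplane. -/
def IsFaceOf {V : Type*} (F P : Set (V → ℝ)) : Prop :=
  F = P ∨ ∃ (l : (V → ℝ) →ₗ[ℝ] ℝ) (c : ℝ), (∀ x ∈ P, l x ≤ c) ∧ F = {x ∈ P | l x = c}

/-- `F` is a facet of `P`: a face of dimension `dim P - 1`. -/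
def IsFacetOf {V : Type*} (F P : Set (V → ℝ)) : Prop :=
  IsFaceOf F P ∧ polyDim F = polyDim P - 1

/-- Each connected component of the subquiver `R1` is a full subquiver of `Q1`. -/
def ComponentsFull {V : Type*} (Q1 R1 : Set (V × V)) : Prop :=
  ∀ v w : V, Relation.EqvGen (edgeRel R1) v w → (v, w) ∈ Q1 → (v, w) ∈ R1

/-- Edge set of the contraction `Q/R`. -/
def contraction {V : Type*} (Q1 R1 : Set (V × V)) :
    Set (Quot (Relation.EqvGen (edgeRel R1)) × Quot (Relation.EqvGen (edgeRel R1))) :=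
  {p | ∃ e ∈ Q1 \ R1, p = (Quot.mk _ e.1, Quot.mk _ e.2)}

/-- A quiver is acyclic if it has no closed directed walk of length `> 1`. -/
def IsAcyclicQ {α : Type*} (E : Set (α × α)) : Prop :=
  ¬ ∃ (n : ℕ) (v : Fin (n + 1) → α), 1 < n ∧ v 0 = v (Fin.last n) ∧
      ∀ i : Fin n, (v i.castSucc, v i.succ) ∈ E

/-!
Extend `e_v ↦ ρ v` to a linear functional `f` on `ℝ^V`, so that `f ε_(v,w) + 1 = ρ v - ρ w + 1`
vanishes on the edges of `R` and has a constant strict sign on the remaining edges of `Q`. Up to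
sign, `{f = -1}` is therefore a supporting hyperplane of `DE(Q)`, and a supporting hyperplane of
`conv S` cuts out the convex hull of the points of `S` lying on it.
-/

theorem convexHull_sep_apply_eq_of_forall_le {𝕜 E β : Type*} [Semiring 𝕜] [PartialOrder 𝕜]
    [AddCommMonoid E] [Module 𝕜 E] [AddCommMonoid β] [PartialOrder β]
    [IsOrderedCancelAddMonoid β] [Module 𝕜 β] [PosSMulStrictMono 𝕜 β]
    {s : Set E} {l : E →ₗ[𝕜] β} {c : β} (hle : ∀ x ∈ s, l x ≤ c) :
    convexHull 𝕜 {x ∈ s | l x = c} = {x ∈ convexHull 𝕜 s | l x = c} := by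
  have hconvex : Convex 𝕜 {x | l x ≤ c ∧ (l x = c → x ∈ convexHull 𝕜 {x ∈ s | l x = c})} := by
    refine convex_iff_forall_pos.mpr fun x hx y hy a b ha hb hab => ⟨?_, fun heq => ?_⟩
    · exact convex_halfSpace_le l.isLinear c hx.1 hy.1 ha.le hb.le hab
    · have hsum : a • l x + b • l y = a • c + b • c := by
        rw [← map_smul, ← map_smul, ← map_add, heq, ← add_smul, hab, one_smul]
      obtain ⟨hax, hby⟩ := (add_eq_add_iff_eq_and_eq (smul_le_smul_of_nonneg_left hx.1 ha.le)
        (smul_le_smul_of_nonneg_left hy.1 hb.le)).mp hsum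
      have hlx : l x = c := hx.1.eq_of_not_lt fun h => (smul_lt_smul_of_pos_left h ha).ne hax
      have hly : l y = c := hy.1.eq_of_not_lt fun h => (smul_lt_smul_of_pos_left h hb).ne hby
      exact convex_convexHull 𝕜 _ (hx.2 hlx) (hy.2 hly) ha.le hb.le hab
  refine Set.Subset.antisymm (Set.subset_inter ?_ ?_) fun x hx => ?_
  · exact convexHull_mono (Set.sep_subset s _)
  · exact convexHull_min (fun x hx => hx.2) (convex_hyperplane l.isLinear c)
  · exact (hconvex.convexHull_subset_iff.mpr
      (fun y hy => ⟨hle y hy, fun h => subset_convexHull 𝕜 _ ⟨hy, h⟩⟩) hx.1).2 hx.2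

theorem exists_linearMap_apply_pi_single {ι K M : Type*} [DecidableEq ι] [DivisionRing K]
    [AddCommGroup M] [Module K M] (ρ : ι → M) :
    ∃ f : (ι → K) →ₗ[K] M, ∀ i, f (Pi.single i 1) = ρ i := by
  -- For infinite `ι` the `Pi.single i 1` do not span, so `f` factors through a projection onto
  -- the finitely supported functions.
  obtain ⟨π, hπ⟩ := (Finsupp.lcoeFun (α := ι) (M := K) (R := K)).exists_leftInverse_of_injective
    (LinearMap.ker_eq_bot.mpr DFunLike.coe_injective)
  refine ⟨Finsupp.linearCombination K ρ ∘ₗ π, fun i => ?_⟩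
  have hsingle : π (Pi.single i 1) = Finsupp.single i 1 := by
    simpa [Finsupp.lcoeFun, Finsupp.single_eq_pi_single]
      using LinearMap.congr_fun hπ (Finsupp.single i 1)
  simp [hsingle]

section DirectedEdgePolytope

variable {V : Type*} [DecidableEq V]

theorem epsVec_eq_single_sub_single (e : V × V) :
    epsVec e = Pi.single e.1 1 - Pi.single e.2 1 := by
  ext u
  simp only [epsVec, Pi.sub_apply, Pi.single_apply]

theorem isFaceOf_DE_of_forall_sub_le {E : Set (V × V)} (φ : V → ℝ) (c : ℝ)
    (hle : ∀ e ∈ E, φ e.1 - φ e.2 ≤ c) :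
    IsFaceOf (DE {e ∈ E | φ e.1 - φ e.2 = c}) (DE E) := by
  obtain ⟨l, hl⟩ := exists_linearMap_apply_pi_single (K := ℝ) φ
  have hl_eps (e : V × V) : l (epsVec e) = φ e.1 - φ e.2 := by
    rw [epsVec_eq_single_sub_single, map_sub, hl, hl]
  have hle_eps : ∀ x ∈ epsVec '' E, l x ≤ c :=
    Set.forall_mem_image.mpr fun e he => (hl_eps e).trans_le (hle e he)
  have himage : epsVec '' {e ∈ E | φ e.1 - φ e.2 = c} = {x ∈ epsVec '' E | l x = c} := by
    simp only [← hl_eps]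
    exact Set.image_inter_preimage epsVec E {x | l x = c}
  refine Or.inr ⟨l, c, ?_, ?_⟩
  · exact convexHull_min hle_eps (convex_halfSpace_le l.isLinear c)
  · rw [DE, himage, convexHull_sep_apply_eq_of_forall_le hle_eps, DE]

theorem face_of_rank_function_general {Q1 R1 : Set (V × V)} (hsub : R1 ⊆ Q1)
    (ρ : V → ℝ) (hρ : ∀ e ∈ R1, ρ e.1 + 1 = ρ e.2)
    (hpos : ∀ e ∈ Q1 \ R1, ∀ e' ∈ Q1 \ R1,
      0 < (ρ e.1 - ρ e.2 + 1) * (ρ e'.1 - ρ e'.2 + 1)) :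
    IsFaceOf (DE R1) (DE Q1) := by
  obtain hempty | ⟨e₀, he₀⟩ := (Q1 \ R1).eq_empty_or_nonempty
  · exact Or.inl (congrArg DE (hsub.antisymm (Set.sdiff_eq_empty.mp hempty)))
  -- Scaling by `-g` makes the supporting inequality independent of the sign on `Q1 \ R1`.
  let g : ℝ := ρ e₀.1 - ρ e₀.2 + 1
  have heq_of_mem : ∀ e ∈ R1, -g * ρ e.1 - -g * ρ e.2 = g := fun e he => by
    rw [← hρ e he]; ring
  have hlt_of_notMem : ∀ e ∈ Q1 \ R1, -g * ρ e.1 - -g * ρ e.2 < g := fun e he => by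
    linarith [hpos e₀ he₀ e he]
  have hR : R1 = {e ∈ Q1 | -g * ρ e.1 - -g * ρ e.2 = g} := by
    refine Set.Subset.antisymm (fun e he => ⟨hsub he, heq_of_mem e he⟩) fun e he => ?_
    by_contra heR
    exact (hlt_of_notMem e ⟨he.1, heR⟩).ne he.2
  have hle : ∀ e ∈ Q1, -g * ρ e.1 - -g * ρ e.2 ≤ g := fun e he => by
    by_cases heR : e ∈ R1
    · exact (heq_of_mem e heR).le
    · exact (hlt_of_notMem e ⟨he, heR⟩).le
  rw [hR]
  exact isFaceOf_DE_of_forall_sub_le (fun v => -g * ρ v) g hle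

end DirectedEdgePolytope

/-- If a lluf proper subquiver `R` has a rank function with the positivity condition on
`Q_1 \ R_1`, then `DE(R)` is a face of `DE(Q)`. -/
theorem face_of_rank_function {V : Type*} [Fintype V] [DecidableEq V]
    (Q1 R1 : Set (V × V)) (hloop : ∀ v : V, (v, v) ∉ Q1) (hproper : R1 ⊂ Q1)
    (ρ : V → ℝ) (hρ : ∀ e ∈ R1, ρ e.1 + 1 = ρ e.2)
    (hpos : ∀ e ∈ Q1 \ R1, ∀ e' ∈ Q1 \ R1,
      0 < (ρ e.1 - ρ e.2 + 1) * (ρ e'.1 - ρ e'.2 + 1)) :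
    IsFaceOf (DE R1) (DE Q1) :=
  face_of_rank_function_general hproper.subset ρ hρ hpos
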